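/- Let μ be an absolutely continuous Borel probability measure on Ω with μ(∂Ω) = 0, let Z be a real-valued function on the Borel probability measures on Ω that is bounded below, and let τ > 0. Then the infimum over Borel measurable maps T : Ω → Ω of Z(T_♯μ) + (1/(2τ)) W2²(T_♯μ, μ) equals the infimum over Borel measurable maps T : Ω → Ω of Z(T_♯μ) + (1/(2τ)) ∫_Ω ‖T(x) − x‖² dμ(x); moreover, any minimizer T of the second problem is an optimal transport map from μ to T_♯μ, i.e. ∫_Ω ‖T(x) − x‖² dμ(x) = W2²(μ, T_♯μ). -/

import Mathlib

/-!
A transport map is a deterministic coupling, so its cost dominates the Kantorovich cost; everything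
rests on the converse, that for an atomless `μ` every coupling `γ` of `μ` and `ν` is approximated in
cost by maps pushing `μ` to `ν`. Cut the source into countably many measurable cells on which the
cost varies by at most `ε`, uniformly in the target point. Since `μ` is atomless, each cell carries
a uniform random variable, hence a map sending the part of `μ` in that cell to the second marginal
of `γ` restricted to that cell. Glued together, these maps produce the same joint law of cell and
target point as `γ`, so their cost differs from that of `γ` by at most `2 ε`.

Among the maps with a prescribed image measure, the infimal cost is therefore the Kantorovich cost.
As `Z` sees a map only through its image measure, the two minimization problems have the same lower
bounds, which gives both the equality of infima and the optimality of minimizers.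
-/

open MeasureTheory

/-- Squared Wasserstein distance between Borel probability measures on a subset `Ω` of
Euclidean space: the infimum of the quadratic transport cost over all couplings. -/
noncomputable def W2sq {d : ℕ} {Ω : Set (EuclideanSpace ℝ (Fin d))}
    (α β : Measure Ω) : ℝ :=
  sInf { c : ℝ | ∃ γ : Measure (Ω × Ω), IsProbabilityMeasure γ ∧
    γ.map Prod.fst = α ∧ γ.map Prod.snd = β ∧
    c = ∫ p, ‖(p.1 : EuclideanSpace ℝ (Fin d)) - (p.2 : EuclideanSpace ℝ (Fin d))‖ ^ 2 ∂γ }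

/-- The quadratic transport cost of a map `T : Ω → Ω` with respect to `μ`. -/
noncomputable def transportCost {d : ℕ} {Ω : Set (EuclideanSpace ℝ (Fin d))}
    (T : Ω → Ω) (μ : Measure Ω) : ℝ :=
  ∫ x, ‖(T x : EuclideanSpace ℝ (Fin d)) - (x : EuclideanSpace ℝ (Fin d))‖ ^ 2 ∂μ

section Atomless

open Set ProbabilityTheory

variable {X Y : Type*} [MeasurableSpace X] [MeasurableSpace Y]

lemma nullSingletonClass_map_of_injective [MeasurableSingletonClass Y] (μ : Measure X)
    [NullSingletonClass μ] {f : X → Y} (hf : Measurable f) (hf_inj : Function.Injective f) :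
    NullSingletonClass (μ.map f) where
  measure_singleton y := by
    rw [Measure.map_apply hf (measurableSet_singleton y)]
    exact (subsingleton_singleton.preimage hf_inj).measure_zero μ

lemma nullSingletonClass_of_map_absolutelyContinuous {μ : Measure X} {ν : Measure Y}
    [NullSingletonClass ν] {f : X → Y} (hf : AEMeasurable f μ) (hac : μ.map f ≪ ν) :
    NullSingletonClass μ where
  measure_singleton x :=
    measure_mono_null (by rintro y rfl; rfl)
      (Measure.preimage_null_of_map_null hf (hac (measure_singleton (f x))))

lemma continuous_cdf (m : Measure ℝ) [IsProbabilityMeasure m] [NullSingletonClass m] :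
    Continuous (cdf m) := by
  refine continuous_iff_continuousAt.mpr fun x => ?_
  have hjump : (cdf m).measure {x} = 0 := by rw [measure_cdf, measure_singleton]
  rw [StieltjesFunction.measure_singleton, ENNReal.ofReal_eq_zero, sub_nonpos] at hjump
  rw [(cdf m).mono.continuousAt_iff_leftLim_eq_rightLim, (cdf m).rightLim_eq]
  exact le_antisymm ((cdf m).mono.leftLim_le le_rfl) hjump

lemma measure_cdf_le (m : Measure ℝ) [IsProbabilityMeasure m] [NullSingletonClass m]
    {t : ℝ} (ht : t ∈ Icc (0 : ℝ) 1) : m {x | cdf m x ≤ t} = ENNReal.ofReal t := by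
  rcases ht.2.eq_or_lt with rfl | ht1
  · simp [cdf_le_one]
  set A := {x | cdf m x ≤ t}
  obtain ⟨b, hb⟩ := ((tendsto_cdf_atTop m).eventually (lt_mem_nhds ht1)).exists
  rcases A.eq_empty_or_nonempty with hA | hA
  · have ht0 : t ≤ 0 := ge_of_tendsto (tendsto_cdf_atBot m) <| .of_forall fun x =>
      (not_le.mp (eq_empty_iff_forall_notMem.mp hA x)).le
    rw [hA, measure_empty, ENNReal.ofReal_of_nonpos ht0]
  · have hA_bdd : BddAbove A :=
      ⟨b, fun x hx => ((cdf m).mono.reflect_lt (lt_of_le_of_lt hx hb)).le⟩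
    set a := sSup A
    have ha : cdf m a ≤ t :=
      (isClosed_le (continuous_cdf m) continuous_const).csSup_mem hA hA_bdd
    have hA_eq : A = Iic a :=
      Subset.antisymm (fun x hx => le_csSup hA_bdd hx) fun x hx => ((cdf m).mono hx).trans ha
    obtain ⟨x, hx⟩ : t ∈ range (cdf m) :=
      mem_range_of_exists_le_of_exists_ge (continuous_cdf m) ⟨a, ha⟩ ⟨b, hb.le⟩
    have hta : t ≤ cdf m a := hx ▸ (cdf m).mono (le_csSup hA_bdd hx.le)
    rw [hA_eq, ← ofReal_cdf, le_antisymm ha hta]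

/-- The cumulative distribution function of a probability measure `m` on `ℝ` as a map into the unit
interval: the probability integral transform of `m`. -/
noncomputable def cdfUnitInterval (m : Measure ℝ) (x : ℝ) : unitInterval :=
  ⟨cdf m x, cdf_nonneg m x, cdf_le_one m x⟩

lemma measurable_cdfUnitInterval (m : Measure ℝ) : Measurable (cdfUnitInterval m) :=
  (cdf m).mono.measurable.subtype_mk

lemma map_cdfUnitInterval (m : Measure ℝ) [IsProbabilityMeasure m] [NullSingletonClass m] :
    m.map (cdfUnitInterval m) = volume := by
  have := Measure.isProbabilityMeasure_map (μ := m) (measurable_cdfUnitInterval m).aemeasurable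
  refine Measure.ext_of_Iic _ _ fun t => ?_
  rw [Measure.map_apply (measurable_cdfUnitInterval m) measurableSet_Iic, unitInterval.volume_Iic]
  exact measure_cdf_le m t.2

lemma exists_measurable_map_eq_volume_unitInterval [MeasurableSpace.CountablySeparated X]
    (μ : Measure X) [IsProbabilityMeasure μ] [NullSingletonClass μ] :
    ∃ f : X → unitInterval, Measurable f ∧ μ.map f = volume := by
  obtain ⟨g, hg, hg_inj⟩ := MeasurableSpace.measurable_injection_nat_bool_of_countablySeparated X
  have hemb := measurableEmbedding_embeddingReal (ℕ → Bool)
  let e : X → ℝ := embeddingReal (ℕ → Bool) ∘ g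
  have he : Measurable e := hemb.measurable.comp hg
  have := nullSingletonClass_map_of_injective μ he (hemb.injective.comp hg_inj)
  have := Measure.isProbabilityMeasure_map (μ := μ) he.aemeasurable
  refine ⟨cdfUnitInterval (μ.map e) ∘ e, (measurable_cdfUnitInterval _).comp he, ?_⟩
  rw [← Measure.map_map (measurable_cdfUnitInterval _) he, map_cdfUnitInterval]

lemma exists_measurable_map_eq_of_nullSingletonClass [MeasurableSpace.CountablySeparated X]
    [StandardBorelSpace Y] [Nonempty Y] (μ : Measure X) [IsFiniteMeasure μ] [NullSingletonClass μ]
    (ν : Measure Y) (h_mass : μ univ = ν univ) :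
    ∃ f : X → Y, Measurable f ∧ μ.map f = ν := by
  rcases eq_or_ne (μ univ) 0 with h0 | h0
  · refine ⟨fun _ => Classical.arbitrary Y, measurable_const, ?_⟩
    rw [Measure.measure_univ_eq_zero.mp h0, Measure.measure_univ_eq_zero.mp (h_mass.symm.trans h0),
      Measure.map_zero]
  · set a := μ univ
    have ha_top : a ≠ ⊤ := measure_ne_top μ univ
    have hμ' : IsProbabilityMeasure (a⁻¹ • μ) := ⟨by simp [a, ENNReal.inv_mul_cancel h0 ha_top]⟩
    have hν' : IsProbabilityMeasure (a⁻¹ • ν) :=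
      ⟨by simp [← h_mass, ENNReal.inv_mul_cancel h0 ha_top]⟩
    have : NullSingletonClass (a⁻¹ • μ) := ⟨fun x => by simp⟩
    obtain ⟨u, hu, hu_map⟩ := exists_measurable_map_eq_volume_unitInterval (a⁻¹ • μ)
    obtain ⟨v, hv, hv_map⟩ := Measure.exists_measurable_map_eq (a⁻¹ • ν)
    refine ⟨v ∘ u, hv.comp hu, ?_⟩
    calc μ.map (v ∘ u) = a • (a⁻¹ • μ).map (v ∘ u) := by
          rw [Measure.map_smul, smul_smul, ENNReal.mul_inv_cancel h0 ha_top, one_smul]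
      _ = a • a⁻¹ • ν := by rw [← Measure.map_map hv hu, hu_map, hv_map]
      _ = ν := by rw [smul_smul, ENNReal.mul_inv_cancel h0 ha_top, one_smul]

end Atomless

section Approximation

open Set

variable {X Y : Type*} [MeasurableSpace X] [MeasurableSpace Y]

lemma exists_measurable_map_prodMk_eq [MeasurableSpace.CountablySeparated X]
    [StandardBorelSpace Y] [Nonempty Y] {ι : Type*} [Countable ι] [MeasurableSpace ι]
    [MeasurableSingletonClass ι] {n : X → ι} (hn : Measurable n) (γ : Measure (X × Y))
    [IsFiniteMeasure γ] [NullSingletonClass γ.fst] :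
    ∃ T : X → Y, Measurable T ∧ γ.fst.map (fun x => (n x, T x)) = γ.map (Prod.map n id) := by
  have hcell (i : ι) : MeasurableSet (n ⁻¹' {i}) := hn (measurableSet_singleton i)
  have hcell_map (i : ι) : ∃ f : X → Y, Measurable f ∧
      (γ.fst.restrict (n ⁻¹' {i})).map f = (γ.restrict (Prod.fst ⁻¹' (n ⁻¹' {i}))).snd := by
    apply exists_measurable_map_eq_of_nullSingletonClass
    rw [Measure.snd_univ, Measure.restrict_apply_univ, Measure.restrict_apply_univ,
      Measure.fst_apply (hcell i)]
  choose f hf hf_map using hcell_map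
  have hT : Measurable fun x => f (n x) x :=
    (measurable_from_prod_countable_right hf : Measurable fun p : ι × X => f p.1 p.2).comp
      (hn.prodMk measurable_id)
  refine ⟨fun x => f (n x) x, hT, ?_⟩
  have hcover : ⋃ i : ι, (Prod.fst ⁻¹' {i} : Set (ι × Y)) = univ := by ext; simp
  refine Measure.ext_of_iUnion_eq_univ hcover fun i => ?_
  have hi : MeasurableSet (Prod.fst ⁻¹' {i} : Set (ι × Y)) :=
    measurable_fst (measurableSet_singleton i)
  calc (γ.fst.map fun x => (n x, f (n x) x)).restrict (Prod.fst ⁻¹' {i})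
      = (γ.fst.restrict (n ⁻¹' {i})).map fun x => (n x, f (n x) x) :=
        Measure.restrict_map (hn.prodMk hT) hi
    _ = (γ.fst.restrict (n ⁻¹' {i})).map (Prod.mk i ∘ f i) :=
        Measure.map_congr <| ae_restrict_of_forall_mem (hcell i) fun x hx => by
          simp only [mem_preimage, mem_singleton_iff] at hx
          simp only [hx, Function.comp_apply]
    _ = (γ.restrict (Prod.fst ⁻¹' (n ⁻¹' {i}))).map (Prod.mk i ∘ Prod.snd) := by
        rw [← Measure.map_map measurable_prodMk_left (hf i), hf_map i, Measure.snd,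
          Measure.map_map measurable_prodMk_left measurable_snd]
    _ = (γ.restrict (Prod.fst ⁻¹' (n ⁻¹' {i}))).map (Prod.map n id) :=
        Measure.map_congr <| ae_restrict_of_forall_mem (measurable_fst (hcell i)) fun p hp => by
          simp only [mem_preimage, mem_singleton_iff] at hp
          simp only [Function.comp_apply, Prod.map, hp, id_eq]
    _ = (γ.map (Prod.map n id)).restrict (Prod.fst ⁻¹' {i}) :=
        (Measure.restrict_map (hn.prodMap measurable_id) hi).symm

lemma exists_measurable_nat_forall_dist_lt [TopologicalSpace X] [LindelofSpace X]
    [OpensMeasurableSpace X] [Nonempty X] {ι α : Type*} [PseudoMetricSpace α] {F : ι → X → α}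
    (hF : Equicontinuous F) {ε : ℝ} (hε : 0 < ε) :
    ∃ (n : X → ℕ) (z : ℕ → X), Measurable n ∧ ∀ x i, dist (F i (z (n x))) (F i x) < ε := by
  classical
  let U (x₀ : X) : Set X := interior {x | ∀ i, dist (F i x₀) (F i x) < ε}
  obtain ⟨s, hs, hs_cover⟩ := countable_cover_nhds_interior fun x₀ =>
    Metric.equicontinuousAt_iff_right.mp (hF x₀) ε hε
  have hs_ne : s.Nonempty := by
    by_contra! hs_empty
    exact empty_ne_univ (by simpa [hs_empty] using hs_cover)
  obtain ⟨z, rfl⟩ := hs.exists_eq_range hs_ne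
  have hz (x : X) : ∃ k, x ∈ U (z k) := by
    simpa only [biUnion_range, mem_iUnion] using hs_cover.symm.subset (mem_univ x)
  exact ⟨fun x => Nat.find (hz x), z,
    measurable_find hz fun k => isOpen_interior.measurableSet,
    fun x => interior_subset (Nat.find_spec (hz x))⟩

lemma integrable_of_dist_le {μ : Measure X} [IsFiniteMeasure μ] {f g : X → ℝ} {ε : ℝ}
    (hf : Integrable f μ) (hg : AEStronglyMeasurable g μ) (h : ∀ x, dist (f x) (g x) ≤ ε) :
    Integrable g μ := by
  have hfg : Integrable (f - g) μ :=
    .of_bound (hf.aestronglyMeasurable.sub hg) ε (ae_of_all _ fun x => h x)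
  simpa only [sub_sub_cancel] using hf.sub hfg

lemma neg_le_integral_of_abs_le {μ : Measure X} [IsProbabilityMeasure μ] {f : X → ℝ} {C : ℝ}
    (h : ∀ x, |f x| ≤ C) : -C ≤ ∫ x, f x ∂μ := by
  have hnorm : ‖∫ x, f x ∂μ‖ ≤ C := by
    simpa using norm_integral_le_of_norm_le_const (ae_of_all μ fun x =>
      (Real.norm_eq_abs (f x)).trans_le (h x))
  exact neg_le_of_abs_le hnorm

lemma integral_le_integral_add_of_dist_le {μ : Measure X} [IsProbabilityMeasure μ] {f g : X → ℝ}
    {ε : ℝ} (hf : Integrable f μ) (hg : Integrable g μ) (h : ∀ x, dist (f x) (g x) ≤ ε) :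
    ∫ x, g x ∂μ ≤ ∫ x, f x ∂μ + ε := by
  calc ∫ x, g x ∂μ ≤ ∫ x, (f x + ε) ∂μ :=
        integral_mono hg (hf.add (integrable_const ε)) fun x => by
          linarith [neg_le_of_abs_le (h x)]
    _ = ∫ x, f x ∂μ + ε := by rw [integral_add hf (integrable_const ε)]; simp

lemma exists_measurable_map_eq_snd_integral_le [TopologicalSpace X] [LindelofSpace X]
    [OpensMeasurableSpace X] [MeasurableSpace.CountablySeparated X] [StandardBorelSpace Y]
    {c : X → Y → ℝ} (hc : Measurable (Function.uncurry c))
    (hc_equi : Equicontinuous fun y x => c x y) (γ : Measure (X × Y)) [IsProbabilityMeasure γ]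
    [NullSingletonClass γ.fst] (hγ : Integrable (Function.uncurry c) γ) {ε : ℝ} (hε : 0 < ε) :
    ∃ T : X → Y, Measurable T ∧ γ.fst.map T = γ.snd ∧
      ∫ x, c x (T x) ∂γ.fst ≤ ∫ p, c p.1 p.2 ∂γ + ε := by
  obtain ⟨x₀, y₀⟩ : Nonempty (X × Y) := nonempty_of_isProbabilityMeasure γ
  have : Nonempty X := ⟨x₀⟩
  have : Nonempty Y := ⟨y₀⟩
  obtain ⟨n, z, hn, hz⟩ := exists_measurable_nat_forall_dist_lt hc_equi (half_pos hε)
  obtain ⟨T, hT, hT_law⟩ := exists_measurable_map_prodMk_eq hn γ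
  have hnT : Measurable fun x => (n x, T x) := hn.prodMk hT
  have hn_id : Measurable (Prod.map n id : X × Y → ℕ × Y) := hn.prodMap measurable_id
  refine ⟨T, hT, ?_, ?_⟩
  · rw [← Measure.snd_map_prodMk hn, hT_law, Measure.snd, Measure.map_map measurable_snd hn_id]
    rfl
  let g : ℕ × Y → ℝ := fun q => c (z q.1) q.2
  have hg : Measurable g :=
    hc.comp ((measurable_from_nat.comp measurable_fst).prodMk measurable_snd)
  have hγ_near (p : X × Y) : dist (c p.1 p.2) (g (Prod.map n id p)) ≤ ε / 2 :=
    (dist_comm _ _).trans_le (hz p.1 p.2).le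
  have hT_near (x : X) : dist (g (n x, T x)) (c x (T x)) ≤ ε / 2 := (hz x (T x)).le
  have hgγ : Integrable (g ∘ Prod.map n id) γ :=
    integrable_of_dist_le hγ (hg.comp hn_id).aestronglyMeasurable hγ_near
  have hgT : Integrable (fun x => g (n x, T x)) γ.fst := by
    rw [← integrable_map_measure hg.aestronglyMeasurable hn_id.aemeasurable, ← hT_law] at hgγ
    exact hgγ.comp_measurable hnT
  have hcT : Integrable (fun x => c x (T x)) γ.fst :=
    integrable_of_dist_le hgT (hc.comp (measurable_id.prodMk hT)).aestronglyMeasurable hT_near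
  calc ∫ x, c x (T x) ∂γ.fst
      ≤ ∫ x, g (n x, T x) ∂γ.fst + ε / 2 := integral_le_integral_add_of_dist_le hgT hcT hT_near
    _ = ∫ p, g (Prod.map n id p) ∂γ + ε / 2 := by
        rw [← integral_map hnT.aemeasurable hg.aestronglyMeasurable, hT_law,
          integral_map hn_id.aemeasurable hg.aestronglyMeasurable]
    _ ≤ ∫ p, c p.1 p.2 ∂γ + ε / 2 + ε / 2 := by
        gcongr
        exact integral_le_integral_add_of_dist_le hγ hgγ hγ_near
    _ = ∫ p, c p.1 p.2 ∂γ + ε := by ring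

end Approximation

section Kantorovich

variable {X Y : Type*} [MeasurableSpace X] [MeasurableSpace Y]

/-- The couplings of `α` and `β`: the probability measures on the product with marginals `α` and
`β`. There are none unless `α` and `β` are probability measures. -/
def couplings (α : Measure X) (β : Measure Y) : Set (Measure (X × Y)) :=
  {γ | IsProbabilityMeasure γ ∧ γ.fst = α ∧ γ.snd = β}

/-- The value of the Kantorovich problem of transporting `α` to `β` for the cost function `c`. It is
meaningful when `c` is integrable for every coupling. -/
noncomputable def kantorovichCost (c : X → Y → ℝ) (α : Measure X) (β : Measure Y) : ℝ :=
  sInf ((fun γ => ∫ p, c p.1 p.2 ∂γ) '' couplings α β)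

lemma map_prodMk_mem_couplings (μ : Measure X) [IsProbabilityMeasure μ] {T : X → Y}
    (hT : Measurable T) : μ.map (fun x => (x, T x)) ∈ couplings μ (μ.map T) :=
  ⟨Measure.isProbabilityMeasure_map (measurable_id.prodMk hT).aemeasurable,
    (Measure.fst_map_prodMk hT).trans Measure.map_id, Measure.snd_map_prodMk measurable_id⟩

lemma map_swap_mem_couplings {α : Measure X} {β : Measure Y} {γ : Measure (X × Y)}
    (hγ : γ ∈ couplings α β) : γ.map Prod.swap ∈ couplings β α := by
  obtain ⟨_, hfst, hsnd⟩ := hγ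
  exact ⟨Measure.isProbabilityMeasure_map measurable_swap.aemeasurable,
    Measure.fst_map_swap.trans hsnd, Measure.snd_map_swap.trans hfst⟩

lemma kantorovichCost_swap (c : X → Y → ℝ) (α : Measure X) (β : Measure Y) :
    kantorovichCost (fun y x => c x y) β α = kantorovichCost c α β := by
  refine congrArg sInf (Set.Subset.antisymm ?_ ?_)
  · rintro _ ⟨γ, hγ, rfl⟩
    exact ⟨γ.map Prod.swap, map_swap_mem_couplings hγ,
      integral_map_equiv MeasurableEquiv.prodComm _⟩
  · rintro _ ⟨γ, hγ, rfl⟩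
    exact ⟨γ.map Prod.swap, map_swap_mem_couplings hγ,
      integral_map_equiv MeasurableEquiv.prodComm _⟩

lemma csInf_eq_csInf_of_lowerBounds_eq {α : Type*} [ConditionallyCompleteLattice α] {s t : Set α}
    (hs : s.Nonempty) (ht : t.Nonempty) (ht_bdd : BddBelow t) (h : lowerBounds s = lowerBounds t) :
    sInf s = sInf t := by
  have hglb := isGLB_csInf ht ht_bdd
  rw [IsGLB, ← h] at hglb
  exact IsGLB.csInf_eq hglb hs

variable {c : X → Y → ℝ} {C : ℝ} (hc : Measurable (Function.uncurry c))
  (hC : ∀ x y, |c x y| ≤ C) {μ : Measure X}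

include hC in
lemma kantorovichCost_le_integral {ν : Measure Y} {γ : Measure (X × Y)}
    (hγ : γ ∈ couplings μ ν) : kantorovichCost c μ ν ≤ ∫ p, c p.1 p.2 ∂γ := by
  refine csInf_le ⟨-C, ?_⟩ ⟨γ, hγ, rfl⟩
  rintro _ ⟨γ', ⟨_, -, -⟩, rfl⟩
  exact neg_le_integral_of_abs_le fun p => hC p.1 p.2

include hc hC in
lemma kantorovichCost_map_le_integral [IsProbabilityMeasure μ] {T : X → Y} (hT : Measurable T) :
    kantorovichCost c μ (μ.map T) ≤ ∫ x, c x (T x) ∂μ := by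
  refine (kantorovichCost_le_integral hC (map_prodMk_mem_couplings μ hT)).trans_eq ?_
  exact integral_map (measurable_id.prodMk hT).aemeasurable hc.aestronglyMeasurable

variable [TopologicalSpace X] [LindelofSpace X] [OpensMeasurableSpace X]
  [MeasurableSpace.CountablySeparated X] [StandardBorelSpace Y]
  (hc_equi : Equicontinuous fun y x => c x y) [IsProbabilityMeasure μ] [NullSingletonClass μ]

include hc hC hc_equi

theorem isGLB_integral_map_eq (ν : Measure Y) [IsProbabilityMeasure ν] :
    IsGLB ((fun T : X → Y => ∫ x, c x (T x) ∂μ) '' {T | Measurable T ∧ μ.map T = ν})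
      (kantorovichCost c μ ν) := by
  constructor
  · rintro _ ⟨T, ⟨hT, rfl⟩, rfl⟩
    exact kantorovichCost_map_le_integral hc hC hT
  · intro b hb
    have hprod : μ.prod ν ∈ couplings μ ν :=
      ⟨inferInstance, Measure.fst_prod, Measure.snd_prod⟩
    refine le_csInf ⟨_, _, hprod, rfl⟩ ?_
    rintro _ ⟨γ, ⟨_, rfl, rfl⟩, rfl⟩
    refine le_of_forall_pos_le_add fun ε hε => ?_
    have hγ : Integrable (Function.uncurry c) γ :=
      .of_bound hc.aestronglyMeasurable C (ae_of_all _ fun p => hC p.1 p.2)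
    obtain ⟨T, hT, hT_map, hT_le⟩ := exists_measurable_map_eq_snd_integral_le hc hc_equi γ hγ hε
    exact (hb ⟨T, ⟨hT, hT_map⟩, rfl⟩).trans hT_le

theorem lowerBounds_add_kantorovichCost_eq (Z : Measure Y → ℝ) {k : ℝ} (hk : 0 < k) :
    lowerBounds {r : ℝ | ∃ T : X → Y, Measurable T ∧
        r = Z (μ.map T) + k * kantorovichCost c μ (μ.map T)}
      = lowerBounds {r : ℝ | ∃ T : X → Y, Measurable T ∧
        r = Z (μ.map T) + k * ∫ x, c x (T x) ∂μ} := by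
  apply Set.Subset.antisymm
  · rintro b hb _ ⟨T, hT, rfl⟩
    refine (hb ⟨T, hT, rfl⟩).trans ?_
    gcongr
    exact kantorovichCost_map_le_integral hc hC hT
  · rintro b hb _ ⟨T, hT, rfl⟩
    have := Measure.isProbabilityMeasure_map (μ := μ) hT.aemeasurable
    suffices (b - Z (μ.map T)) / k ≤ kantorovichCost c μ (μ.map T) by
      rwa [div_le_iff₀' hk, sub_le_iff_le_add'] at this
    refine (isGLB_integral_map_eq hc hC hc_equi (μ.map T)).2 ?_
    rintro _ ⟨S, ⟨hS, hS_map⟩, rfl⟩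
    rw [div_le_iff₀' hk, sub_le_iff_le_add', ← hS_map]
    exact hb ⟨S, hS, rfl⟩

theorem stmt1_general (Z : Measure Y → ℝ) (hZ : BddBelow (Set.range Z)) {τ : ℝ} (hτ : 0 < τ) :
    (sInf {r : ℝ | ∃ T : X → Y, Measurable T ∧
        r = Z (μ.map T) + (1 / (2 * τ)) * kantorovichCost c μ (μ.map T)}
      = sInf {r : ℝ | ∃ T : X → Y, Measurable T ∧
        r = Z (μ.map T) + (1 / (2 * τ)) * ∫ x, c x (T x) ∂μ})
    ∧ ∀ T : X → Y, Measurable T →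
        (∀ S : X → Y, Measurable S →
          Z (μ.map T) + (1 / (2 * τ)) * ∫ x, c x (T x) ∂μ
            ≤ Z (μ.map S) + (1 / (2 * τ)) * ∫ x, c x (S x) ∂μ) →
        ∫ x, c x (T x) ∂μ = kantorovichCost c μ (μ.map T) := by
  have hk : 0 < 1 / (2 * τ) := by positivity
  have hlower := lowerBounds_add_kantorovichCost_eq (μ := μ) hc hC hc_equi Z hk
  constructor
  · rcases isEmpty_or_nonempty Y with hY | ⟨⟨y₀⟩⟩
    · have := nonempty_of_isProbabilityMeasure μ
      simp
    have hbdd : BddBelow {r : ℝ | ∃ T : X → Y, Measurable T ∧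
        r = Z (μ.map T) + (1 / (2 * τ)) * ∫ x, c x (T x) ∂μ} := by
      obtain ⟨b, hb⟩ := hZ
      refine ⟨b + 1 / (2 * τ) * -C, ?_⟩
      rintro _ ⟨T, -, rfl⟩
      exact add_le_add (hb (Set.mem_range_self _))
        (mul_le_mul_of_nonneg_left (neg_le_integral_of_abs_le fun x => hC x (T x)) hk.le)
    exact csInf_eq_csInf_of_lowerBounds_eq ⟨_, fun _ => y₀, measurable_const, rfl⟩
      ⟨_, fun _ => y₀, measurable_const, rfl⟩ hbdd hlower
  · intro T hT hT_min
    refine le_antisymm ?_ (kantorovichCost_map_le_integral hc hC hT)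
    have hT_lower : Z (μ.map T) + (1 / (2 * τ)) * ∫ x, c x (T x) ∂μ ∈
        lowerBounds {r : ℝ | ∃ S : X → Y, Measurable S ∧
          r = Z (μ.map S) + (1 / (2 * τ)) * ∫ x, c x (S x) ∂μ} := by
      rintro _ ⟨S, hS, rfl⟩
      exact hT_min S hS
    rw [← hlower] at hT_lower
    exact le_of_mul_le_mul_left (le_of_add_le_add_left (hT_lower ⟨T, hT, rfl⟩)) hk

end Kantorovich

section SquaredDistance

lemma abs_dist_sq_le_diam_sq {X : Type*} [PseudoMetricSpace X] [BoundedSpace X] (x y : X) :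
    |dist x y ^ 2| ≤ Metric.diam (Set.univ : Set X) ^ 2 := by
  rw [abs_of_nonneg (by positivity)]
  gcongr
  exact Metric.dist_le_diam_of_mem (Bornology.isBounded_univ.mpr inferInstance) trivial trivial

lemma equicontinuous_dist_sq (X : Type*) [PseudoMetricSpace X] [BoundedSpace X] :
    Equicontinuous fun y x : X => dist x y ^ 2 := by
  set D := Metric.diam (Set.univ : Set X)
  have hD (x y : X) : dist x y ≤ D :=
    Metric.dist_le_diam_of_mem (Bornology.isBounded_univ.mpr inferInstance) trivial trivial
  refine Metric.equicontinuous_of_continuity_modulus (fun t => t * (D + D)) ?_ _ fun x x' y => ?_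
  · simpa using (continuous_mul_const (D + D)).tendsto 0
  calc dist (dist x y ^ 2) (dist x' y ^ 2)
      = |dist x y - dist x' y| * (dist x y + dist x' y) := by
        rw [Real.dist_eq, sq_sub_sq, abs_mul, mul_comm, abs_of_nonneg (a := _ + _) (by positivity)]
    _ ≤ dist x x' * (D + D) := by
        gcongr
        exacts [abs_dist_sub_le x x' y, hD x y, hD x' y]

variable {d : ℕ} {Ω : Set (EuclideanSpace ℝ (Fin d))}

lemma W2sq_eq_kantorovichCost (α β : Measure Ω) :
    W2sq α β = kantorovichCost (fun x y => dist x y ^ 2) α β := by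
  simp only [W2sq, kantorovichCost, couplings, Set.image, Measure.fst, Measure.snd,
    Subtype.dist_eq, dist_eq_norm, Set.mem_ofPred_eq, and_assoc, eq_comm]

lemma W2sq_comm (α β : Measure Ω) : W2sq α β = W2sq β α := by
  simpa only [W2sq_eq_kantorovichCost, dist_comm] using
    (kantorovichCost_swap (fun x y : Ω => dist x y ^ 2) α β).symm

lemma transportCost_eq_integral_dist_sq (T : Ω → Ω) (μ : Measure Ω) :
    transportCost T μ = ∫ x, dist x (T x) ^ 2 ∂μ := by
  simp only [transportCost, Subtype.dist_eq, dist_eq_norm, norm_sub_rev]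

end SquaredDistance

theorem stmt1 {d : ℕ} (hd : 1 ≤ d) (Ω : Set (EuclideanSpace ℝ (Fin d)))
    (hconv : Convex ℝ Ω) (hcomp : IsCompact Ω)
    (hfront : volume (frontier Ω) = 0)
    (μ : Measure Ω) (hμ : IsProbabilityMeasure μ)
    (hac : μ.map (Subtype.val : Ω → EuclideanSpace ℝ (Fin d)) ≪ volume)
    (hμfront : μ.map (Subtype.val : Ω → EuclideanSpace ℝ (Fin d)) (frontier Ω) = 0)
    (Z : Measure Ω → ℝ) (hZ : BddBelow (Set.range Z))
    (τ : ℝ) (hτ : 0 < τ) :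
    (sInf { c : ℝ | ∃ T : Ω → Ω, Measurable T ∧
        c = Z (μ.map T) + (1 / (2 * τ)) * W2sq (μ.map T) μ }
      = sInf { c : ℝ | ∃ T : Ω → Ω, Measurable T ∧
        c = Z (μ.map T) + (1 / (2 * τ)) * transportCost T μ })
    ∧ ∀ T : Ω → Ω, Measurable T →
        (∀ S : Ω → Ω, Measurable S →
          Z (μ.map T) + (1 / (2 * τ)) * transportCost T μ
            ≤ Z (μ.map S) + (1 / (2 * τ)) * transportCost S μ) →
        transportCost T μ = W2sq μ (μ.map T) := by
  have : Nonempty (Fin d) := ⟨⟨0, hd⟩⟩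
  have : CompactSpace Ω := isCompact_iff_compactSpace.mp hcomp
  have : NullSingletonClass μ :=
    nullSingletonClass_of_map_absolutelyContinuous measurable_subtype_coe.aemeasurable hac
  simpa only [W2sq_comm _ μ, W2sq_eq_kantorovichCost, transportCost_eq_integral_dist_sq] using
    stmt1_general (by fun_prop) abs_dist_sq_le_diam_sq (equicontinuous_dist_sq Ω) Z hZ hτ
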